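/- The number of regions of the Shi arrangement S_n in R^n equals (n+1)^(n-1). -/

import Mathlib

namespace ShiProof

/-- A hyperplane `x i - x j = c`. -/
abbrev Hyp (n : ℕ) := Fin n × Fin n × ℤ

/-- The affine form of a hyperplane. -/
def hev {n : ℕ} {R : Type*} [CommRing R] (H : Hyp n) (x : Fin n → R) : R :=
  x H.1 - x H.2.1 - (H.2.2 : R)

/-- Projection onto the hyperplane by changing the first coordinate. -/
def proj {n : ℕ} {R : Type*} [CommRing R] (H : Hyp n) (x : Fin n → R) : Fin n → R :=
  Function.update x H.1 (x H.2.1 + (H.2.2 : R))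

/-- Substitution of the equation of `H` in `G`. -/
def sub {n : ℕ} (H G : Hyp n) : Hyp n :=
  (if G.1 = H.1 then H.2.1 else G.1, if G.2.1 = H.1 then H.2.1 else G.2.1,
    G.2.2 - (if G.1 = H.1 then H.2.2 else 0) + (if G.2.1 = H.1 then H.2.2 else 0))

theorem hev_sub {n : ℕ} {R : Type*} [CommRing R] (H G : Hyp n) (x : Fin n → R) :
    hev (sub H G) x = hev G (proj H x) := by
  unfold hev sub proj
  by_cases h1 : G.1 = H.1 <;> by_cases h2 : G.2.1 = H.1 <;>
    simp [h1, h2, Function.update_apply] <;> ring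

theorem hev_proj {n : ℕ} {R : Type*} [CommRing R] (H : Hyp n) (hH : H.1 ≠ H.2.1)
    (x : Fin n → R) : hev H (proj H x) = 0 := by
  unfold hev proj
  simp [Function.update_apply, hH.symm]

theorem proj_eq {n : ℕ} {R : Type*} [CommRing R] (H : Hyp n)
    (x : Fin n → R) (h : hev H x = 0) : proj H x = x := by
  unfold hev at h
  unfold proj
  have : x H.2.1 + (H.2.2 : R) = x H.1 := by linear_combination -h
  rw [this, Function.update_eq_self]

open Classical in
/-- Recursive count of the regions of `A` inside `C`. -/
noncomputable def rr {n : ℕ} : List (Hyp n) → Set (Fin n → ℝ) → ℕ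
  | [], C => if C.Nonempty then 1 else 0
  | H :: A, C => rr A (C ∩ {x | 0 < hev H x}) + rr A (C ∩ {x | hev H x < 0})

theorem continuous_hev {n : ℕ} (H : Hyp n) : Continuous (hev H : (Fin n → ℝ) → ℝ) := by
  unfold hev; fun_prop

theorem hev_comb {n : ℕ} (H : Hyp n) (x y : Fin n → ℝ) (a b : ℝ) (hab : a + b = 1) :
    hev H (a • x + b • y) = a * hev H x + b * hev H y := by
  unfold hev
  simp
  linear_combination ((H.2.2 : ℝ)) * hab

theorem convex_pos {n : ℕ} (H : Hyp n) : Convex ℝ {x : Fin n → ℝ | 0 < hev H x} := by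
  intro x hx y hy a b ha hb hab
  simp only [Set.mem_ofPred_eq] at *
  rw [hev_comb H x y a b hab]
  rcases eq_or_lt_of_le ha with h | h
  · have : b = 1 := by linarith
    subst h; subst this; simpa using hy
  · nlinarith [mul_pos h hx, mul_nonneg hb hy.le]

theorem convex_neg {n : ℕ} (H : Hyp n) : Convex ℝ {x : Fin n → ℝ | hev H x < 0} := by
  intro x hx y hy a b ha hb hab
  simp only [Set.mem_ofPred_eq] at *
  rw [hev_comb H x y a b hab]
  rcases eq_or_lt_of_le ha with h | h
  · have : b = 1 := by linarith
    subst h; subst this; simpa using hy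
  · nlinarith [mul_pos h (neg_pos.2 hx), mul_nonneg hb (neg_pos.2 hy).le]

theorem isOpen_pos {n : ℕ} (H : Hyp n) : IsOpen {x : Fin n → ℝ | 0 < hev H x} :=
  isOpen_lt continuous_const (continuous_hev H)

theorem isOpen_neg {n : ℕ} (H : Hyp n) : IsOpen {x : Fin n → ℝ | hev H x < 0} :=
  isOpen_lt (continuous_hev H) continuous_const

theorem exists_near {n : ℕ} (H : Hyp n) (hH : H.1 ≠ H.2.1) (C : Set (Fin n → ℝ)) (hC : IsOpen C)
    (z : Fin n → ℝ) (hz : z ∈ C) (hz0 : hev H z = 0) :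
    (C ∩ {x | 0 < hev H x}).Nonempty ∧ (C ∩ {x | hev H x < 0}).Nonempty := by
  let g : ℝ → (Fin n → ℝ) := fun t => Function.update z H.1 (z H.1 + t)
  have hg : Continuous g := by
    show Continuous fun t : ℝ => Function.update z H.1 (z H.1 + t)
    fun_prop
  have hg0 : g 0 = z := by simp [g]
  have hgt : ∀ t, hev H (g t) = t := by
    intro t
    have : hev H (g t) = hev H z + t := by
      simp [hev, g, Function.update_apply, hH.symm]; ring
    rw [this, hz0, zero_add]
  have hnh : g ⁻¹' C ∈ nhds (0 : ℝ) := (hC.preimage hg).mem_nhds (by simpa [hg0] using hz)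
  obtain ⟨ε, hε, hb⟩ := Metric.mem_nhds_iff.1 hnh
  constructor
  · refine ⟨g (ε / 2), hb ?_, ?_⟩
    · simp [abs_of_pos hε]; exact hε
    · simp only [Set.mem_ofPred_eq, hgt]; linarith
  · refine ⟨g (-(ε / 2)), hb ?_, ?_⟩
    · simp [abs_of_pos hε]; exact hε
    · simp only [Set.mem_ofPred_eq, hgt]; linarith

theorem exists_zero {n : ℕ} (H : Hyp n) (C : Set (Fin n → ℝ)) (hC : Convex ℝ C)
    (h1 : (C ∩ {x | 0 < hev H x}).Nonempty) (h2 : (C ∩ {x | hev H x < 0}).Nonempty) :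
    (C ∩ {x | hev H x = 0}).Nonempty := by
  obtain ⟨x, hx, hx0⟩ := h1
  obtain ⟨y, hy, hy0⟩ := h2
  simp only [Set.mem_ofPred_eq] at hx0 hy0
  have hd : 0 < hev H x - hev H y := by linarith
  have hab : -hev H y / (hev H x - hev H y) + hev H x / (hev H x - hev H y) = 1 := by
    field_simp; ring
  refine ⟨(-hev H y / (hev H x - hev H y)) • x + (hev H x / (hev H x - hev H y)) • y,
    hC hx hy (div_nonneg (by linarith) hd.le) (div_nonneg (by linarith) hd.le) hab, ?_⟩
  simp only [Set.mem_ofPred_eq]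
  rw [hev_comb _ _ _ _ _ hab]
  field_simp
  ring

theorem rr_cut {n : ℕ} (H : Hyp n) (hH : H.1 ≠ H.2.1) (A : List (Hyp n)) :
    ∀ C : Set (Fin n → ℝ), IsOpen C → Convex ℝ C →
      rr (H :: A) C = rr A C + rr A (C ∩ {x | hev H x = 0}) := by
  induction A with
  | nil =>
    intro C hC hC'
    simp only [rr]
    have a1 := exists_zero H C hC'
    have a2 : (C ∩ {x | hev H x = 0}).Nonempty →
      (C ∩ {x | 0 < hev H x}).Nonempty ∧ (C ∩ {x | hev H x < 0}).Nonempty := by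
      rintro ⟨z, hz, hz0⟩
      exact exists_near H hH C hC z hz hz0
    have a3 : C.Nonempty → (C ∩ {x | 0 < hev H x}).Nonempty ∨ (C ∩ {x | hev H x < 0}).Nonempty ∨
        (C ∩ {x | hev H x = 0}).Nonempty := by
      rintro ⟨z, hz⟩
      rcases lt_trichotomy 0 (hev H z) with h | h | h
      · exact Or.inl ⟨z, hz, h⟩
      · exact Or.inr (Or.inr ⟨z, hz, h.symm⟩)
      · exact Or.inr (Or.inl ⟨z, hz, h⟩)
    have a4 : (C ∩ {x | 0 < hev H x}).Nonempty → C.Nonempty := fun h => h.mono Set.inter_subset_left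
    have a5 : (C ∩ {x | hev H x < 0}).Nonempty → C.Nonempty := fun h => h.mono Set.inter_subset_left
    have a6 : (C ∩ {x | hev H x = 0}).Nonempty → C.Nonempty := fun h => h.mono Set.inter_subset_left
    generalize (C ∩ {x | 0 < hev H x}).Nonempty = p1 at *
    generalize (C ∩ {x | hev H x < 0}).Nonempty = p2 at *
    generalize (C ∩ {x | hev H x = 0}).Nonempty = p3 at *
    generalize C.Nonempty = p4 at *
    clear hC hC'
    split_ifs <;> first | omega | (exfalso; tauto)
  | cons G A ih =>
    intro C hC hC'
    have e1 := ih (C ∩ {x | 0 < hev G x}) (hC.inter (isOpen_pos G)) (hC'.inter (convex_pos G))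
    have e2 := ih (C ∩ {x | hev G x < 0}) (hC.inter (isOpen_neg G)) (hC'.inter (convex_neg G))
    simp only [rr] at e1 e2 ⊢
    rw [Set.inter_right_comm C {x | 0 < hev H x}, Set.inter_right_comm C {x | 0 < hev H x},
      Set.inter_right_comm C {x | hev H x < 0}, Set.inter_right_comm C {x | hev H x < 0},
      Set.inter_right_comm C {x | hev H x = 0}, Set.inter_right_comm C {x | hev H x = 0}]
    omega

theorem rr_sub {n : ℕ} (H : Hyp n) (hH : H.1 ≠ H.2.1) (A : List (Hyp n)) :
    ∀ C : Set (Fin n → ℝ), rr (A.map (sub H)) (proj H ⁻¹' C) = rr A (C ∩ {x | hev H x = 0}) := by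
  induction A with
  | nil =>
    intro C
    simp only [rr, List.map_nil]
    have : (proj H ⁻¹' C).Nonempty ↔ (C ∩ {x | hev H x = 0}).Nonempty := by
      constructor
      · rintro ⟨x, hx⟩
        exact ⟨proj H x, hx, hev_proj H hH x⟩
      · rintro ⟨x, hx, h0⟩
        exact ⟨x, by simpa [proj_eq H x h0] using hx⟩
    rw [this]
  | cons G A ih =>
    intro C
    simp only [rr, List.map_cons, hev_sub]
    rw [Set.inter_right_comm C {x | hev H x = 0}, Set.inter_right_comm C {x | hev H x = 0},
      ← ih, ← ih]
    rfl

theorem rr_empty {n : ℕ} (A : List (Hyp n)) : rr A ∅ = 0 := by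
  induction A with
  | nil => simp [rr]
  | cons H A ih => simp [rr, ih]

/-- Sign vector. -/
noncomputable def signs {n : ℕ} (A : List (Hyp n)) (x : Fin n → ℝ) : List Prop :=
  A.map (fun H => 0 < hev H x)

theorem finite_signs {n : ℕ} (A : List (Hyp n)) (S : Set (Fin n → ℝ)) :
    (signs A '' S).Finite := by
  refine (List.finite_length_eq Prop A.length).subset ?_
  rintro _ ⟨x, -, rfl⟩
  simp [signs]

theorem rr_eq {n : ℕ} (A : List (Hyp n)) : ∀ C : Set (Fin n → ℝ),
    rr A C = (signs A '' (C ∩ {x | ∀ H ∈ A, hev H x ≠ 0})).ncard := by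
  induction A with
  | nil =>
    intro C
    simp only [rr]
    split_ifs with h
    · have : signs ([] : List (Hyp n)) '' (C ∩ {x | ∀ H ∈ ([] : List (Hyp n)), hev H x ≠ 0})
        = {[]} := by
        ext l
        obtain ⟨z, hz⟩ := h
        simp [signs]
        exact fun _ => ⟨z, hz⟩
      rw [this, Set.ncard_singleton]
    · rw [Set.not_nonempty_iff_eq_empty] at h
      simp [h]
  | cons H A ih =>
    intro C
    simp only [rr, ih]
    have : signs (H :: A) '' (C ∩ {x | ∀ G ∈ H :: A, hev G x ≠ 0}) =
        (List.cons True) '' (signs A '' ((C ∩ {x | 0 < hev H x}) ∩ {x | ∀ H ∈ A, hev H x ≠ 0})) ∪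
        (List.cons False) '' (signs A '' ((C ∩ {x | hev H x < 0}) ∩ {x | ∀ H ∈ A, hev H x ≠ 0})) := by
      ext l
      constructor
      · rintro ⟨x, ⟨hx, hx0⟩, rfl⟩
        have h0 : hev H x ≠ 0 := hx0 H (by simp)
        have hA : ∀ G ∈ A, hev G x ≠ 0 := fun G hG => hx0 G (by simp [hG])
        rcases lt_or_gt_of_ne h0 with h | h
        · right
          refine ⟨_, ⟨x, ⟨⟨hx, h⟩, hA⟩, rfl⟩, ?_⟩
          have : ¬ (0 < hev H x) := not_lt.2 h.le
          simp [signs, this]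
        · left
          refine ⟨_, ⟨x, ⟨⟨hx, h⟩, hA⟩, rfl⟩, ?_⟩
          have : (0 < hev H x) := h
          simp [signs, this]
      · rintro (⟨_, ⟨x, ⟨⟨hx, h⟩, hA⟩, rfl⟩, rfl⟩ | ⟨_, ⟨x, ⟨⟨hx, h⟩, hA⟩, rfl⟩, rfl⟩)
        · simp only [Set.mem_ofPred_eq] at h
          refine ⟨x, ⟨hx, ?_⟩, ?_⟩
          · intro G hG
            rcases List.mem_cons.1 hG with rfl | hG
            · exact h.ne'
            · exact hA G hG
          · simp [signs, h]
        · simp only [Set.mem_ofPred_eq] at h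
          have h' : ¬ (0 < hev H x) := not_lt.2 h.le
          refine ⟨x, ⟨hx, ?_⟩, ?_⟩
          · intro G hG
            rcases List.mem_cons.1 hG with rfl | hG
            · exact h.ne
            · exact hA G hG
          · simp [signs, h']
    rw [this, Set.ncard_union_eq _ ((finite_signs _ _).image _) ((finite_signs _ _).image _),
      Set.ncard_image_of_injective _ List.cons_injective,
      Set.ncard_image_of_injective _ List.cons_injective]
    rw [Set.disjoint_left]
    rintro _ ⟨a, -, rfl⟩ ⟨b, -, hb⟩
    simp at hb

theorem signs_eq_iff {n : ℕ} (A : List (Hyp n)) (x y : Fin n → ℝ) :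
    signs A x = signs A y ↔ ∀ H ∈ A, (0 < hev H x ↔ 0 < hev H y) := by
  simp [signs]

theorem convex_fiber {n : ℕ} (A : List (Hyp n)) (x : Fin n → ℝ) :
    Convex ℝ {y : Fin n → ℝ | (∀ H ∈ A, hev H y ≠ 0) ∧ signs A y = signs A x} := by
  have : {y : Fin n → ℝ | (∀ H ∈ A, hev H y ≠ 0) ∧ signs A y = signs A x} =
      ⋂ H ∈ A, {y | hev H y ≠ 0 ∧ (0 < hev H y ↔ 0 < hev H x)} := by
    ext y
    simp only [signs_eq_iff, Set.mem_ofPred_eq, Set.mem_iInter]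
    exact ⟨fun h H hH => ⟨h.1 H hH, h.2 H hH⟩, fun h => ⟨fun H hH => (h H hH).1, fun H hH => (h H hH).2⟩⟩
  rw [this]
  refine convex_iInter fun H => convex_iInter fun hH => ?_
  by_cases h : 0 < hev H x
  · convert convex_pos H using 1
    ext y
    simp only [h, iff_true, Set.mem_ofPred_eq]
    exact ⟨fun h => h.2, fun h => ⟨h.ne', h⟩⟩
  · convert convex_neg H using 1
    ext y
    simp only [h, iff_false, Set.mem_ofPred_eq, not_lt]
    exact ⟨fun h => lt_of_le_of_ne h.2 h.1, fun h => ⟨h.ne, h.le⟩⟩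

theorem card_components {n : ℕ} (A : List (Hyp n)) :
    Nat.card (ConnectedComponents {x : Fin n → ℝ // ∀ H ∈ A, hev H x ≠ 0}) = rr A Set.univ := by
  rw [rr_eq]
  set X := {x : Fin n → ℝ // ∀ H ∈ A, hev H x ≠ 0}
  have key : ∀ x y : X, (x : ConnectedComponents X) = y ↔ signs A x.1 = signs A y.1 := by
    intro x y
    rw [ConnectedComponents.coe_eq_coe']
    constructor
    · intro h
      rw [signs_eq_iff]
      intro H hH
      have hcl : IsClopen {z : X | 0 < hev H z.1} := by
        have hc : Continuous fun z : X => hev H z.1 := (continuous_hev H).comp continuous_subtype_val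
        refine ⟨?_, isOpen_lt continuous_const hc⟩
        have : {z : X | 0 < hev H z.1} = {z : X | 0 ≤ hev H z.1} := by
          ext z
          exact ⟨fun h => le_of_lt (show 0 < hev H z.1 from h), fun h => lt_of_le_of_ne (show 0 ≤ hev H z.1 from h) (z.2 H hH).symm⟩
        rw [this]
        exact isClosed_le continuous_const hc
      constructor
      · intro hx
        have h' : y ∈ connectedComponent x := by
          rw [← connectedComponent_eq h]; exact mem_connectedComponent
        exact hcl.connectedComponent_subset (show x ∈ {z : X | 0 < hev H z.1} from hx) h'
      · intro hy
        exact hcl.connectedComponent_subset (show y ∈ {z : X | 0 < hev H z.1} from hy) h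
    · intro h
      have hp : IsPreconnected {z : X | signs A z.1 = signs A y.1} := by
        rw [← (Topology.IsInducing.subtypeVal : Topology.IsInducing (Subtype.val : X → (Fin n → ℝ))).isPreconnected_image]
        have : Subtype.val '' {z : X | signs A z.1 = signs A y.1} =
            {z : Fin n → ℝ | (∀ H ∈ A, hev H z ≠ 0) ∧ signs A z = signs A y.1} := by
          ext z
          constructor
          · rintro ⟨w, hw, rfl⟩; exact ⟨w.2, hw⟩
          · rintro ⟨h1, h2⟩; exact ⟨⟨z, h1⟩, h2, rfl⟩
        have hq := (convex_fiber A y.1).isPreconnected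
        rw [← this] at hq
        exact hq
      exact hp.subset_connectedComponent (show y ∈ {z : X | signs A z.1 = signs A y.1} from rfl) h
  let f : ConnectedComponents X → List Prop :=
    Quotient.lift (fun x : X => signs A x.1) (fun x y h => (key x y).1 (Quotient.sound h))
  have hf : ∀ x : X, f (x : ConnectedComponents X) = signs A x.1 := fun x => rfl
  have hinj : Function.Injective f := by
    intro a b hab
    obtain ⟨x, rfl⟩ := ConnectedComponents.surjective_coe a
    obtain ⟨y, rfl⟩ := ConnectedComponents.surjective_coe b
    rw [hf, hf] at hab
    exact (key x y).2 hab
  have hr : Set.range f = signs A '' (Set.univ ∩ {x | ∀ H ∈ A, hev H x ≠ 0}) := by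
    ext l
    constructor
    · rintro ⟨a, rfl⟩
      obtain ⟨x, rfl⟩ := ConnectedComponents.surjective_coe a
      exact ⟨x.1, ⟨trivial, x.2⟩, rfl⟩
    · rintro ⟨x, ⟨-, hx⟩, rfl⟩
      exact ⟨((⟨x, hx⟩ : X) : ConnectedComponents X), rfl⟩
  rw [← hr, ← Set.image_univ, Set.ncard_image_of_injective _ hinj, Set.ncard_univ]

theorem card_components' {n : ℕ} (A : List (Hyp n)) (p : (Fin n → ℝ) → Prop)
    (hp : ∀ x, p x ↔ ∀ H ∈ A, hev H x ≠ 0) :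
    Nat.card (ConnectedComponents {x : Fin n → ℝ // p x}) = rr A Set.univ := by
  obtain rfl : p = fun x => ∀ H ∈ A, hev H x ≠ 0 := funext fun x => propext (hp x)
  exact card_components A

/-- Number of points over `ZMod q`. -/
noncomputable def N {n : ℕ} (q : ℕ) (A : List (Hyp n)) : ℕ :=
  Nat.card {x : Fin n → ZMod q // ∀ H ∈ A, hev H x ≠ 0}

theorem N_cons {n : ℕ} (q : ℕ) [NeZero q] (H : Hyp n) (hH : H.1 ≠ H.2.1) (A : List (Hyp n)) :
    q * N q A = q * N q (H :: A) + N q (A.map (sub H)) := by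
  classical
  have e1 : N q A = N q (H :: A) +
      Nat.card {x : Fin n → ZMod q // (∀ G ∈ A, hev G x ≠ 0) ∧ hev H x = 0} := by
    unfold N
    simp only [Nat.card_eq_fintype_card, Fintype.card_subtype]
    rw [← Finset.card_union_of_disjoint]
    · congr 1
      ext x
      simp only [Finset.mem_filter, Finset.mem_univ, true_and, Finset.mem_union,
        List.forall_mem_cons]
      tauto
    · rw [Finset.disjoint_left]
      simp
      tauto
  have e2 : N q (A.map (sub H)) =
      q * Nat.card {x : Fin n → ZMod q // (∀ G ∈ A, hev G x ≠ 0) ∧ hev H x = 0} := by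
    have hq : Nat.card (ZMod q) = q := by simp
    nth_rewrite 2 [← hq]
    rw [← Nat.card_prod]
    unfold N
    simp only [List.forall_mem_map, hev_sub]
    refine Nat.card_congr
      { toFun := fun x => (x.1 H.1, ⟨proj H x.1, x.2, hev_proj H hH _⟩)
        invFun := fun p => ⟨Function.update p.2.1 H.1 p.1, ?_⟩
        left_inv := ?_
        right_inv := ?_ }
    · have : proj H (Function.update p.2.1 H.1 p.1) = p.2.1 := by
        conv_rhs => rw [← proj_eq H p.2.1 p.2.2.2]
        simp [proj, hH.symm]
      rw [this]
      exact p.2.2.1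
    · intro x
      apply Subtype.ext
      simp [proj]
    · rintro ⟨a, x, hx, hx0⟩
      have : proj H (Function.update x H.1 a) = x := by
        conv_rhs => rw [← proj_eq H x hx0]
        simp [proj, hH.symm]
      simp [this]
  rw [e2, e1]; ring

theorem main_poly {n : ℕ} : ∀ (m : ℕ) (A : List (Hyp n)), A.length = m →
    ∃ (k B : ℕ) (P : Polynomial ℤ), (∀ q : ℕ, B < q → (q : ℤ) ^ k * N q A = P.eval (q : ℤ)) ∧
      (rr A Set.univ : ℤ) = (-1) ^ (n + k) * P.eval (-1) := by
  intro m
  induction m with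
  | zero =>
    intro A hA
    obtain rfl := List.length_eq_zero_iff.1 hA
    refine ⟨0, 0, Polynomial.X ^ n, ?_, ?_⟩
    · intro q hq
      haveI : NeZero q := ⟨by omega⟩
      simp [N]
    · simp [rr, ← mul_pow]
  | succ m ih =>
    intro A hA
    match A, hA with
    | H :: A, hA =>
    have hA : A.length = m := by simpa using hA
    by_cases hH : H.1 = H.2.1
    · by_cases hc : H.2.2 = 0
      · have h0 : ∀ {R : Type} [CommRing R] (x : Fin n → R), hev H x = 0 := by
          intro R _ x; simp [hev, hH, hc]
        refine ⟨0, 0, 0, ?_, ?_⟩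
        · intro q hq
          simp [N, h0]
        · simp [rr, h0, rr_empty]
      · obtain ⟨k, B, P, h1, h2⟩ := ih A hA
        refine ⟨k, max B H.2.2.natAbs, P, ?_, ?_⟩
        · intro q hq
          rw [← h1 q (lt_of_le_of_lt (le_max_left _ _) hq)]
          have : ∀ x : Fin n → ZMod q, hev H x ≠ 0 := by
            intro x hx
            have hx : ((H.2.2 : ℤ) : ZMod q) = 0 := by simpa [hev, hH] using hx
            rw [ZMod.intCast_zmod_eq_zero_iff_dvd] at hx
            have := Int.natAbs_dvd_natAbs.2 hx
            have := Nat.le_of_dvd (by omega) this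
            simp at this
            have := le_max_right B H.2.2.natAbs
            omega
          simp [N, this]
        · rw [← h2]
          have : ∀ x : Fin n → ℝ, hev H x = -(H.2.2 : ℝ) := by
            intro x; simp [hev, hH]
          rcases lt_or_gt_of_ne hc with h | h
          · have h' : (H.2.2 : ℝ) < 0 := by exact_mod_cast h
            simp [rr, this, h', h'.le, rr_empty, h, h.le, not_lt.2 h.le]
          · have h' : 0 < (H.2.2 : ℝ) := by exact_mod_cast h
            simp [rr, this, h', h'.le, rr_empty, h, h.le, not_lt.2 h.le]
    · obtain ⟨k1, B1, P1, h1, h1'⟩ := ih A hA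
      obtain ⟨k2, B2, P2, h2, h2'⟩ := ih (A.map (sub H)) (by simpa using hA)
      refine ⟨k1 + k2 + 1, max B1 B2, Polynomial.X ^ (k2 + 1) * P1 - Polynomial.X ^ k1 * P2, ?_, ?_⟩
      · intro q hq
        haveI : NeZero q := ⟨by omega⟩
        have a1 := h1 q (lt_of_le_of_lt (le_max_left _ _) hq)
        have a2 := h2 q (lt_of_le_of_lt (le_max_right _ _) hq)
        have a3 : (q : ℤ) * N q A = q * N q (H :: A) + N q (A.map (sub H)) := by
          exact_mod_cast N_cons q H hH A
        simp only [Polynomial.eval_sub, Polynomial.eval_mul, Polynomial.eval_pow, Polynomial.eval_X]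
        rw [← a1, ← a2]
        linear_combination (-(q : ℤ) ^ (k1 + k2)) * a3
      · rw [rr_cut H hH A _ isOpen_univ convex_univ, ← rr_sub H hH]
        rw [Set.preimage_univ]
        push_cast
        rw [h1', h2']
        simp only [Polynomial.eval_sub, Polynomial.eval_mul, Polynomial.eval_pow, Polynomial.eval_X]
        have s1 : ((-1 : ℤ) ^ k1) * (-1) ^ k1 = 1 := by simp [← mul_pow]
        have s2 : ((-1 : ℤ) ^ k2) * (-1) ^ k2 = 1 := by simp [← mul_pow]
        simp only [pow_add, pow_one]
        linear_combination (-(-1 : ℤ) ^ n * (-1) ^ k1 * P1.eval (-1)) * s2 - ((-1 : ℤ) ^ n * (-1) ^ k2 * P2.eval (-1)) * s1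

/-- Placements on a line. -/
def Good (n m : ℕ) (y : Fin (n + 1) → ℕ) : Prop :=
  y 0 = 0 ∧ (∀ i, y i < m) ∧ ∀ i j, i < j → y i ≠ y j ∧ y i ≠ y j + 1

theorem good_inj {n m : ℕ} {y : Fin (n + 1) → ℕ} (h : Good n m y) : Function.Injective y := by
  intro i j hij
  rcases lt_trichotomy i j with h' | h' | h'
  · exact absurd hij (h.2.2 _ _ h').1
  · exact h'
  · exact absurd hij.symm (h.2.2 _ _ h').1

theorem good_finite (n m : ℕ) : Finite {y // Good n m y} := by
  refine Finite.of_injective (β := Fin (n + 1) → Fin m) (fun y i => ⟨y.1 i, y.2.2.1 i⟩) ?_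
  intro y z h
  apply Subtype.ext
  funext i
  simpa using congrFun h i

/-- Removing the last label. -/
def goodEquiv (n m : ℕ) : {y // Good (n + 1) (m + 1) y} ≃
    Σ y : {y // Good n m y}, {e : ℕ // e < m + 1 ∧ ∀ i, y.1 i ≠ e} where
  toFun y := ⟨⟨fun i => if y.1 (Fin.last _) < y.1 i.castSucc then y.1 i.castSucc - 1
      else y.1 i.castSucc, by
      obtain ⟨y, h0, hm, h⟩ := y
      have hl := fun i : Fin (n + 1) => h i.castSucc (Fin.last _) (Fin.castSucc_lt_last i)
      refine ⟨by simp [h0], fun i => ?_, fun i j hij => ?_⟩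
      · have := hl i
        have := hm i.castSucc
        have := hm (Fin.last _)
        dsimp only
        split_ifs <;> omega
      · have := hl i
        have := hl j
        have := h i.castSucc j.castSucc (Fin.castSucc_lt_castSucc_iff.2 hij)
        dsimp only
        split_ifs <;> omega⟩, ⟨y.1 (Fin.last _), by
      obtain ⟨y, h0, hm, h⟩ := y
      have hl := fun i : Fin (n + 1) => h i.castSucc (Fin.last _) (Fin.castSucc_lt_last i)
      refine ⟨hm _, fun i => ?_⟩
      have := hl i
      dsimp only
      split_ifs <;> omega⟩⟩
  invFun p := ⟨Fin.snoc (α := fun _ => ℕ) (fun i => if p.2.1 ≤ p.1.1 i then p.1.1 i + 1 else p.1.1 i) p.2.1, by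
      obtain ⟨⟨y, h0, hm, h⟩, e, he, hne⟩ := p
      refine ⟨?_, fun i => ?_, fun i j hij => ?_⟩
      · have := hne 0
        rw [show (0 : Fin (n + 1 + 1)) = Fin.castSucc 0 from rfl, Fin.snoc_castSucc]
        dsimp only at *
        split_ifs <;> omega
      · induction i using Fin.lastCases with
        | last => simpa using he
        | cast i =>
          have := hm i
          rw [Fin.snoc_castSucc]
          dsimp only at *
          split_ifs <;> omega
      · induction i using Fin.lastCases with
        | last => exact absurd hij (not_lt.2 (Fin.le_last j))
        | cast i =>
          induction j using Fin.lastCases with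
          | last =>
            have := hne i
            rw [Fin.snoc_castSucc, Fin.snoc_last]
            dsimp only at *
            split_ifs <;> omega
          | cast j =>
            have := hne i
            have := hne j
            have := h i j (Fin.castSucc_lt_castSucc_iff.1 hij)
            rw [Fin.snoc_castSucc, Fin.snoc_castSucc]
            dsimp only at *
            split_ifs <;> omega⟩
  left_inv y := by
    obtain ⟨y, h0, hm, h⟩ := y
    apply Subtype.ext
    funext i
    induction i using Fin.lastCases with
    | last => simp
    | cast i =>
      have := h i.castSucc (Fin.last _) (Fin.castSucc_lt_last i)
      dsimp only
      rw [Fin.snoc_castSucc]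
      split_ifs <;> omega
  right_inv p := by
    obtain ⟨⟨y, h0, hm, h⟩, e, he, hne⟩ := p
    have key : ∀ (i : Fin (n + 1)) (a b : ℕ), a = (if e ≤ y i then y i + 1 else y i) → b = e →
        (if b < a then a - 1 else a) = y i := by
      intro i a b ha hb
      have := hne i
      dsimp only at *
      subst hb
      split_ifs at ha ⊢ <;> omega
    refine Sigma.subtype_ext (Subtype.ext (funext fun i => ?_)) ?_
    · refine key i _ _ ?_ ?_
      · dsimp only
        rw [Fin.snoc_castSucc]
      · dsimp only
        rw [Fin.snoc_last]
    · dsimp only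
      rw [Fin.snoc_last]

theorem card_empty {n m : ℕ} (y : {y // Good n m y}) :
    Nat.card {e : ℕ // e < m + 1 ∧ ∀ i, y.1 i ≠ e} = m - n := by
  have : Nat.card {e : ℕ // e < m + 1 ∧ ∀ i, y.1 i ≠ e} =
      (Finset.range (m + 1) \ Finset.univ.image y.1).card := by
    rw [← Nat.card_eq_finsetCard]
    refine Nat.card_congr (Equiv.subtypeEquivRight fun e => ?_)
    simp
  rw [this, Finset.card_sdiff_of_subset, Finset.card_image_of_injective _ (good_inj y.2)]
  · simp
  · intro e he
    simp only [Finset.mem_image, Finset.mem_univ, true_and] at he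
    obtain ⟨i, rfl⟩ := he
    have := y.2.2.1 i
    simp; omega

theorem card_good (n d : ℕ) (hd : 1 ≤ d) : Nat.card {y // Good n (n + d) y} = d ^ n := by
  induction n with
  | zero =>
    rw [pow_zero, Nat.card_eq_one_iff_unique]
    refine ⟨⟨fun a b => Subtype.ext (funext fun i => ?_)⟩, ⟨⟨fun _ => 0, rfl, fun i => by simp; omega, fun i j hij => ?_⟩⟩⟩
    · rw [show i = 0 from Fin.ext (by simpa using i.2), a.2.1, b.2.1]
    · omega
  | succ n ih =>
    rw [show n + 1 + d = (n + d) + 1 by omega, Nat.card_congr (goodEquiv n (n + d))]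
    haveI := good_finite n (n + d)
    haveI := Fintype.ofFinite {y // Good n (n + d) y}
    haveI : ∀ y : {y // Good n (n + d) y}, Finite {e : ℕ // e < n + d + 1 ∧ ∀ i, y.1 i ≠ e} :=
      fun y => (((Set.finite_lt_nat (n + d + 1)).subset (fun e he => he.1)) :
        Set.Finite {e : ℕ | e < n + d + 1 ∧ ∀ i, y.1 i ≠ e})
    rw [Nat.card_sigma]
    simp only [card_empty]
    rw [Finset.sum_const, Finset.card_univ, ← Nat.card_eq_fintype_card, ih]
    simp [pow_succ]

theorem card_circle (n d : ℕ) (hd : 1 ≤ d) :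
    Nat.card {x : Fin (n + 1) → ZMod (n + d + 1) //
      ∀ i j, i < j → x i - x j ≠ 0 ∧ x i - x j ≠ 1} = (n + d + 1) * d ^ n := by
  rw [← card_good n d hd]
  have hq : (n + d + 1) * Nat.card {y // Good n (n + d) y} = Nat.card (ZMod (n + d + 1)) * Nat.card {y // Good n (n + d) y} := by simp
  rw [hq, ← Nat.card_prod]
  have cast_inj : ∀ a b : ℕ, a < n + d + 1 → b < n + d + 1 →
      (a : ZMod (n + d + 1)) = b → a = b := by
    intro a b ha hb h
    rw [← ZMod.val_cast_of_lt ha, ← ZMod.val_cast_of_lt hb, h]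
  have cv : ∀ a : ZMod (n + d + 1), ((a.val : ℕ) : ZMod (n + d + 1)) = a :=
    fun a => ZMod.natCast_zmod_val a
  refine Nat.card_congr
    { toFun := fun x => (x.1 0, ⟨fun i => (x.1 i - x.1 0).val, ?_⟩)
      invFun := fun p => ⟨fun i => p.1 + (p.2.1 i : ZMod (n + d + 1)), ?_⟩
      left_inv := ?_
      right_inv := ?_ }
  · obtain ⟨x, hx⟩ := x
    refine ⟨by simp, fun i => ?_, fun i j hij => ⟨fun h => ?_, fun h => ?_⟩⟩
    · have hlt := ZMod.val_lt (x i - x 0)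
      by_contra hcon
      have hv : (x i - x 0).val = n + d := by dsimp only at hcon; omega
      have hi : i ≠ 0 := by
        rintro rfl
        simp at hv; omega
      have h0 := (hx 0 i (Fin.pos_of_ne_zero hi)).2
      apply h0
      have h1 : ((n + d + 1 : ℕ) : ZMod (n + d + 1)) = 0 := ZMod.natCast_self _
      have h2 := cv (x i - x 0)
      rw [hv] at h2
      push_cast at h1 h2
      linear_combination h2 - h1
    · apply (hx i j hij).1
      have h2 := cv (x i - x 0)
      have h3 := cv (x j - x 0)
      dsimp only at h
      rw [h] at h2
      linear_combination h3 - h2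
    · apply (hx i j hij).2
      have h2 := cv (x i - x 0)
      have h3 := cv (x j - x 0)
      dsimp only at h
      rw [h] at h2
      push_cast at h2
      linear_combination h3 - h2
  · obtain ⟨a, y, h0, hm, h⟩ := p
    intro i j hij
    have hi := hm i
    have hj := hm j
    refine ⟨fun he => (h i j hij).1 (cast_inj _ _ (by omega) (by omega) ?_),
      fun he => (h i j hij).2 (cast_inj _ _ (by omega) (by omega) ?_)⟩
    · dsimp only at he
      linear_combination he
    · dsimp only at he
      push_cast
      linear_combination he
  · intro x
    apply Subtype.ext
    funext i
    dsimp only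
    rw [cv]; ring
  · rintro ⟨a, y, h0, hm, h⟩
    have : ∀ i, (y i : ZMod (n + d + 1)).val = y i := fun i =>
      ZMod.val_cast_of_lt (by have := hm i; omega)
    simp [h0, this]

/-- The Shi arrangement as a list. -/
noncomputable def shi (n : ℕ) : List (Hyp n) :=
  ((Finset.univ : Finset (Fin n × Fin n)).toList.filter (fun p => p.1 < p.2)).flatMap
    (fun p => [(p.1, p.2, 0), (p.1, p.2, 1)])

theorem shi_iff {n : ℕ} {R : Type*} [CommRing R] (x : Fin n → R) :
    (∀ H ∈ shi n, hev H x ≠ 0) ↔ ∀ i j : Fin n, i < j → x i - x j ≠ 0 ∧ x i - x j ≠ 1 := by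
  constructor
  · intro h i j hij
    have h1 := h (i, j, 0) (by simp [shi, hij])
    have h2 := h (i, j, 1) (by simp [shi, hij])
    simp only [hev, Int.cast_zero, Int.cast_one, sub_zero] at h1 h2
    exact ⟨h1, fun h => h2 (by rw [h, sub_self])⟩
  · rintro h ⟨i, j, c⟩ hH
    simp [shi] at hH
    obtain ⟨a, b, hij, ⟨rfl, rfl, rfl⟩ | ⟨rfl, rfl, rfl⟩⟩ := hH
    · simpa [hev] using (h i j hij).1
    · have := (h i j hij).2
      simpa [hev, sub_eq_zero] using this

end ShiProof

open ShiProof in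
/-- The Shi arrangement Sₙ (hyperplanes xᵢ - xⱼ = 0 and xᵢ - xⱼ = 1 for i < j)
dissects ℝⁿ into (n+1)^(n-1) regions (connected components of the complement). -/
theorem shi_arrangement_regions (n : ℕ) (hn : 1 ≤ n) :
    Nat.card (ConnectedComponents
      {x : Fin n → ℝ // ∀ i j : Fin n, i < j → x i - x j ≠ 0 ∧ x i - x j ≠ 1}) =
    (n + 1) ^ (n - 1) := by
  rw [card_components' (shi n) _ (fun x => (shi_iff x).symm)]
  obtain ⟨n, rfl⟩ : ∃ m, n = m + 1 := ⟨n - 1, by omega⟩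
  obtain ⟨k, B, P, h1, h2⟩ := main_poly _ (shi (n + 1)) rfl
  have hP : P = Polynomial.X ^ k * (Polynomial.X * (Polynomial.X - Polynomial.C ((n : ℤ) + 1)) ^ n) := by
    apply Polynomial.eq_of_infinite_eval_eq
    refine Set.Infinite.mono (s := Set.range fun t : ℕ => ((n + (B + 1 + t) + 1 : ℕ) : ℤ)) ?_ ?_
    · rintro _ ⟨t, rfl⟩
      have e := h1 (n + (B + 1 + t) + 1) (by omega)
      simp only [Set.mem_ofPred_eq]
      rw [← e]
      unfold N
      simp only [shi_iff]
      rw [card_circle n (B + 1 + t) (by omega)]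
      simp only [Polynomial.eval_sub, Polynomial.eval_mul, Polynomial.eval_pow, Polynomial.eval_X,
        Polynomial.eval_C]
      push_cast
      ring
    · apply Set.infinite_range_of_injective
      intro a b hab
      simp only at hab
      omega
  have : (rr (shi (n + 1)) Set.univ : ℤ) = (n + 1 + 1) ^ n := by
    rw [h2, hP]
    simp only [Polynomial.eval_sub, Polynomial.eval_mul, Polynomial.eval_pow, Polynomial.eval_X,
        Polynomial.eval_C]
    have s1 : ((-1 : ℤ) ^ k) * (-1) ^ k = 1 := by simp [← mul_pow]
    have s2 : ((-1 : ℤ) ^ n) * (-1) ^ n = 1 := by simp [← mul_pow]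
    rw [show (-1 - ((n : ℤ) + 1)) = (-1) * (n + 1 + 1) by ring, mul_pow]
    simp only [pow_add, pow_one]
    calc _ = (((-1 : ℤ) ^ k) * (-1) ^ k) * (((-1 : ℤ) ^ n) * (-1) ^ n) * (n + 1 + 1 : ℤ) ^ n := by ring
      _ = _ := by rw [s1, s2]; ring
  simp only [Nat.add_sub_cancel]
  exact_mod_cast this
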